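/- Assume m > n. Then there exist complex numbers a_{i,s} (for each integer i with 1 ≤ i ≤ 2N−1, i ≠ N, and each s = 0,…,m+n) with a_{i,0} = 1 such that the polynomials q¹ᵢ = ∑_{s=0}^{m+n} a_{i,s}·z^{(m+n−s)N+i}·w^{Ns} and q²ᵢ = ∑_{s=0}^{m+n} \overline{a_{i,s}}·w^{(m+n−s)N+i}·z^{Ns} are quasi-invariant, and such that the 2N+2 polynomials q⁰ = 1, q¹ = (z^N+w^N)^{2n+1}, q² = (z^N−w^N)^{2m+1}, q³ = q¹·q², together with q¹ᵢ and q²ᵢ for 1 ≤ i ≤ 2N−1, i ≠ N, form a free basis of the module of quasi-invariants over S: every quasi-invariant p ∈ R can be written in exactly one way as p = s₀·q⁰ + s₁·q¹ + s₂·q² + s₃·q³ + ∑ᵢ (s¹ᵢ·q¹ᵢ + s²ᵢ·q²ᵢ) with all coefficients s₀, s₁, s₂, s₃, s¹ᵢ, s²ᵢ in S. -/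

import Mathlib

open MvPolynomial Finset

noncomputable section

/-- The polynomial ring `R = ℂ[z,w]`. -/
abbrev R2 : Type := MvPolynomial (Fin 2) ℂ

/-- `z`, the first variable. -/
def zP : R2 := X 0

/-- `w`, the second variable (playing the role of `z̄`). -/
def wP : R2 := X 1

/-- `ε = exp(πi/N)`, a primitive `2N`-th root of unity. -/
def eps (N : ℕ) : ℂ := Complex.exp ((Real.pi : ℂ) * Complex.I / (N : ℂ))

/-- The reflection `σⱼ : z ↦ ε^j w, w ↦ ε^{-j} z` as a `ℂ`-algebra endomorphism. -/
def dihRefl (N j : ℕ) : R2 →ₐ[ℂ] R2 :=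
  aeval (fun k : Fin 2 => if k = 0 then C (eps N ^ j) * X 1 else C (eps N ^ (-(j : ℤ))) * X 0)

/-- The multiplicity `mⱼ`: `m` for even `j`, `n` for odd `j`. -/
def mult (m n j : ℕ) : ℕ := if Even j then m else n

/-- Quasi-invariance for the dihedral system `I₂(2N)` with multiplicities `(m,n)`. -/
def IsQuasiInv (N m n : ℕ) (p : R2) : Prop :=
  ∀ j < 2 * N, (zP - C (eps N ^ j) * wP) ^ (2 * mult m n j + 1) ∣ dihRefl N j p - p

/-- The algebra `S` of invariants of `I₂(2N)`, generated by `z·w` and `z^{2N}+w^{2N}`. -/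
def Sinv (N : ℕ) : Subalgebra ℂ R2 :=
  Algebra.adjoin ℂ {zP * wP, zP ^ (2 * N) + wP ^ (2 * N)}

/-- The index set `{1,…,2N−1} \ {N}`. -/
def idxSet (N : ℕ) : Finset ℕ :=
  (Finset.range (2 * N)).filter (fun i => 1 ≤ i ∧ i ≠ N)

/-- `q¹ᵢ` built from a coefficient vector `a`. -/
def q1i (N m n i : ℕ) (a : ℕ → ℂ) : R2 :=
  ∑ s ∈ Finset.range (m + n + 1), C (a s) * zP ^ ((m + n - s) * N + i) * wP ^ (N * s)

/-- `q²ᵢ` built from a coefficient vector `a` (conjugate coefficients, variables swapped). -/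
def q2i (N m n i : ℕ) (a : ℕ → ℂ) : R2 :=
  ∑ s ∈ Finset.range (m + n + 1),
    C (starRingEnd ℂ (a s)) * wP ^ ((m + n - s) * N + i) * zP ^ (N * s)


/-! ### Rotations and reflections -/

def rotU (u : ℂ) : R2 →ₐ[ℂ] R2 :=
  aeval (fun k : Fin 2 => if k = 0 then C u * X 0 else C u⁻¹ * X 1)

def reflU (u : ℂ) : R2 →ₐ[ℂ] R2 :=
  aeval (fun k : Fin 2 => if k = 0 then C u * X 1 else C u⁻¹ * X 0)

lemma dihRefl_eq (N j : ℕ) : dihRefl N j = reflU (eps N ^ j) := by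
  simp [dihRefl, reflU]

@[simp] lemma rot_z (u : ℂ) : rotU u zP = C u * zP := by simp [rotU, zP]
@[simp] lemma rot_w (u : ℂ) : rotU u wP = C u⁻¹ * wP := by simp [rotU, wP]
@[simp] lemma refl_z (u : ℂ) : reflU u zP = C u * wP := by simp [reflU, zP, wP]
@[simp] lemma refl_w (u : ℂ) : reflU u wP = C u⁻¹ * zP := by simp [reflU, zP, wP]
@[simp] lemma rot_C (u c : ℂ) : rotU u (C c) = C c := by simp [rotU]
@[simp] lemma refl_C (u c : ℂ) : reflU u (C c) = C c := by simp [reflU]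

lemma hom_ext {f g : R2 →ₐ[ℂ] R2} (hz : f zP = g zP) (hw : f wP = g wP) : f = g := by
  apply MvPolynomial.algHom_ext
  intro i
  fin_cases i
  · exact hz
  · exact hw

lemma rot_one : rotU 1 = AlgHom.id ℂ R2 := by apply hom_ext <;> simp

lemma rot_rot (u v : ℂ) (p : R2) : rotU u (rotU v p) = rotU (u * v) p := by
  have : (rotU u).comp (rotU v) = rotU (u * v) := by
    apply hom_ext <;> simp <;> ring
  exact congrArg (fun f => f p) this

lemma refl_rot (u v : ℂ) (p : R2) : reflU u (rotU v p) = reflU (u * v) p := by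
  have : (reflU u).comp (rotU v) = reflU (u * v) := by
    apply hom_ext <;> simp <;> ring
  exact congrArg (fun f => f p) this

lemma rot_refl (u v : ℂ) (p : R2) : rotU v (reflU u p) = reflU (u * v⁻¹) p := by
  have : (rotU v).comp (reflU u) = reflU (u * v⁻¹) := by
    apply hom_ext <;> simp <;> ring
  exact congrArg (fun f => f p) this

lemma refl_refl (u v : ℂ) (p : R2) : reflU u (reflU v p) = rotU (v * u⁻¹) p := by
  have : (reflU u).comp (reflU v) = rotU (v * u⁻¹) := by
    apply hom_ext <;> simp <;> ring
  exact congrArg (fun f => f p) this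

lemma refl_invol (u : ℂ) (hu : u ≠ 0) (p : R2) : reflU u (reflU u p) = p := by
  rw [refl_refl, mul_inv_cancel₀ hu, rot_one]; rfl

lemma refl_line (u : ℂ) (hu : u ≠ 0) : reflU u (zP - C u * wP) = -(zP - C u * wP) := by
  simp only [map_sub, map_mul, refl_z, refl_w, refl_C]
  rw [← mul_assoc, ← C_mul, mul_inv_cancel₀ hu]
  simp

lemma line_ne_zero (u : ℂ) : zP - C u * wP ≠ 0 := by
  intro h
  have := congrArg (MvPolynomial.eval (fun k : Fin 2 => if k = 0 then (1:ℂ) else 0)) h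
  simp [zP, wP] at this

/-- `σ p - p` is always divisible by the line. -/
lemma line_dvd (u : ℂ) (hu : u ≠ 0) (p : R2) : (zP - C u * wP) ∣ reflU u p - p := by
  induction p using MvPolynomial.induction_on with
  | C a => simp
  | add p q hp hq =>
    rw [map_add, add_sub_add_comm]; exact dvd_add hp hq
  | mul_X p i hp =>
    have key : (zP - C u * wP) ∣ reflU u (X i) - X i := by
      fin_cases i
      · refine ⟨-1, ?_⟩
        have := refl_z u
        simp only [zP] at this
        simp [this, zP]
      · refine ⟨C u⁻¹, ?_⟩
        have := refl_w u
        simp only [wP] at this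
        simp only [Fin.mk_one]
        rw [this, sub_mul, mul_comm (C u), mul_assoc (wP), ← C_mul, mul_inv_cancel₀ hu]
        simp [wP, mul_comm]
    rw [map_mul]
    have : reflU u p * reflU u (X i) - p * X i
        = (reflU u p - p) * reflU u (X i) + p * (reflU u (X i) - X i) := by ring
    rw [this]
    exact dvd_add (hp.mul_right _) (key.mul_left _)

lemma anti_dvd (u : ℂ) (hu : u ≠ 0) (d : R2) (hd : reflU u d = -d) (k : ℕ)
    (h : (zP - C u * wP) ^ (2 * k) ∣ d) : (zP - C u * wP) ^ (2 * k + 1) ∣ d := by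
  obtain ⟨y, rfl⟩ := h
  rw [map_mul, map_pow, refl_line u hu, Even.neg_pow ⟨k, by ring⟩, ← mul_neg] at hd
  have hy := mul_left_cancel₀ (pow_ne_zero _ (line_ne_zero u)) hd
  have h2 := line_dvd u hu y
  rw [hy] at h2
  have h3 : (zP - C u * wP) ∣ y := by
    have := h2.mul_left (C (-1/2 : ℂ))
    have e : C (-1/2 : ℂ) * (-y - y) = y := by
      have : (-y - y : R2) = C (-2) * y := by
        rw [C_neg, show (C 2 : R2) = 2 from rfl]; ring
      rw [this, ← mul_assoc, ← C_mul]; norm_num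
    rwa [e] at this
  rw [pow_succ]
  exact mul_dvd_mul_left _ h3

/-! ### The Euler-type derivation and shift operators -/

def Eu : Derivation ℂ R2 R2 :=
  mkDerivation ℂ (fun k : Fin 2 => if k = 0 then zP else -wP)

@[simp] lemma Eu_z : Eu zP = zP := by
  show Eu (X 0) = zP
  rw [Eu, mkDerivation_X]; simp
@[simp] lemma Eu_w : Eu wP = -wP := by
  show Eu (X 1) = -wP
  rw [Eu, mkDerivation_X]; simp
@[simp] lemma Eu_C (c : ℂ) : Eu (C c) = 0 := Derivation.map_algebraMap Eu c

lemma Eu_refl (u : ℂ) (p : R2) : Eu (reflU u p) = -reflU u (Eu p) := by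
  induction p using MvPolynomial.induction_on with
  | C a => simp
  | add p q hp hq => simp only [map_add, hp, hq]; ring
  | mul_X p i hp =>
    have key : Eu (reflU u (X i)) = -reflU u (Eu (X i)) := by
      fin_cases i
      · show Eu (reflU u zP) = -reflU u (Eu zP)
        simp
      · show Eu (reflU u wP) = -reflU u (Eu wP)
        simp
    simp only [map_mul, Derivation.leibniz, key, hp, smul_eq_mul, map_add]
    ring

lemma Eu_zpow (a : ℕ) : Eu (zP ^ a) = C (a : ℂ) * zP ^ a := by
  cases a with
  | zero => simp
  | succ a => 
    rw [Derivation.leibniz_pow, Eu_z]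
    simp [pow_succ]

lemma Eu_wpow (a : ℕ) : Eu (wP ^ a) = - (C (a : ℂ) * wP ^ a) := by
  cases a with
  | zero => simp
  | succ a => 
    rw [Derivation.leibniz_pow, Eu_w]
    simp [pow_succ]

/-- The general shift operator. -/
def shiftOp (δ κ p : R2) : R2 := δ * Eu p - κ * p

lemma refl_shiftOp (u : ℂ) (δ κ p : R2) (hδ : reflU u δ = -δ) (hκ : reflU u κ = κ) :
    reflU u (shiftOp δ κ p) = shiftOp δ κ (reflU u p) := by
  simp only [shiftOp, map_sub, map_mul, hδ, hκ, Eu_refl]; ring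

lemma shiftOp_dvd (u : ℂ) (hu : u ≠ 0) (δ κ p : R2) (k : ℕ)
    (hδ : reflU u δ = -δ) (hκ : reflU u κ = κ) (hl : (zP - C u * wP) ∣ δ)
    (hk : (zP - C u * wP) ∣ C ((2 * k + 1 : ℕ) : ℂ) * Eu δ - κ)
    (h : (zP - C u * wP) ^ (2 * k + 1) ∣ reflU u p - p) :
    (zP - C u * wP) ^ (2 * (k + 1) + 1) ∣
      reflU u (shiftOp δ κ p) - shiftOp δ κ p := by
  have hanti : reflU u (reflU u (shiftOp δ κ p) - shiftOp δ κ p)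
      = -(reflU u (shiftOp δ κ p) - shiftOp δ κ p) := by
    rw [map_sub, refl_invol u hu]; ring
  apply anti_dvd u hu _ hanti
  rw [refl_shiftOp u δ κ p hδ hκ]
  have e : shiftOp δ κ (reflU u p) - shiftOp δ κ p = shiftOp δ κ (reflU u p - p) := by
    simp only [shiftOp, map_sub]; ring
  rw [e]
  obtain ⟨r, hr⟩ := h
  obtain ⟨g, hg⟩ := hl
  obtain ⟨y, hy⟩ := hk
  rw [hr]
  set l := zP - C u * wP with hl
  have e2 : Eu δ = l * Eu g + g * Eu l := by
    rw [hg, Derivation.leibniz]; simp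
  have e3 : shiftOp δ κ (l ^ (2 * k + 1) * r)
      = l ^ (2 * k + 1) * ((C ((2 * k + 1 : ℕ) : ℂ) * Eu δ - κ) * r
          + l * (g * Eu r - C ((2 * k + 1 : ℕ) : ℂ) * Eu g * r)) := by
    rw [shiftOp, Derivation.leibniz, Derivation.leibniz_pow, e2, hg]
    simp only [smul_eq_mul, nsmul_eq_mul, map_natCast, Nat.add_sub_cancel]
    ring
  rw [e3, hy, show 2 * (k + 1) = (2 * k + 1) + 1 by ring, pow_succ, mul_assoc, ← mul_add, ]
  exact mul_dvd_mul_left _ (dvd_mul_right _ _)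

/-! ### Roots of unity -/

lemma eps_prim {N : ℕ} (hN : 1 ≤ N) : IsPrimitiveRoot (eps N) (2 * N) := by
  have h := Complex.isPrimitiveRoot_exp (2 * N) (by omega)
  have e : eps N = Complex.exp (2 * Real.pi * Complex.I / ((2 * N : ℕ) : ℂ)) := by
    rw [eps]
    congr 1
    have : (N : ℂ) ≠ 0 := by exact_mod_cast (by omega : N ≠ 0)
    push_cast
    field_simp
  rw [e]; exact h

lemma eps_ne (N : ℕ) : eps N ≠ 0 := Complex.exp_ne_zero _

lemma eps_pow_N {N : ℕ} (hN : 1 ≤ N) : eps N ^ N = -1 := by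
  have h : (N : ℂ) ≠ 0 := by exact_mod_cast (by omega : N ≠ 0)
  rw [eps, ← Complex.exp_nat_mul, mul_div_cancel₀ _ h, Complex.exp_pi_mul_I]

lemma eps_pow_jN {N : ℕ} (hN : 1 ≤ N) (j : ℕ) : (eps N ^ j) ^ N = (-1) ^ j := by
  rw [← pow_mul, mul_comm, pow_mul, eps_pow_N hN]

lemma neg_one_pow_inv (j : ℕ) : (((-1 : ℂ)) ^ j)⁻¹ = (-1) ^ j := by
  rw [← inv_pow]; norm_num

lemma reflU_zN {N : ℕ} (hN : 1 ≤ N) (j : ℕ) :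
    reflU (eps N ^ j) (zP ^ N) = C ((-1) ^ j) * wP ^ N := by
  rw [map_pow, refl_z, mul_pow, ← C_pow, eps_pow_jN hN]

lemma reflU_wN {N : ℕ} (hN : 1 ≤ N) (j : ℕ) :
    reflU (eps N ^ j) (wP ^ N) = C ((-1) ^ j) * zP ^ N := by
  rw [map_pow, refl_w, mul_pow, ← C_pow, inv_pow, eps_pow_jN hN, neg_one_pow_inv]

lemma line_dvd_even {N : ℕ} (hN : 1 ≤ N) {j : ℕ} (hj : Even j) :
    (zP - C (eps N ^ j) * wP) ∣ zP ^ N - wP ^ N := by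
  have := sub_dvd_pow_sub_pow zP (C (eps N ^ j) * wP) N
  rwa [mul_pow, ← C_pow, eps_pow_jN hN, hj.neg_one_pow, C_1, one_mul] at this

lemma line_dvd_odd {N : ℕ} (hN : 1 ≤ N) {j : ℕ} (hj : ¬ Even j) :
    (zP - C (eps N ^ j) * wP) ∣ zP ^ N + wP ^ N := by
  have := sub_dvd_pow_sub_pow zP (C (eps N ^ j) * wP) N
  rw [mul_pow, ← C_pow, eps_pow_jN hN, (Nat.not_even_iff_odd.mp hj).neg_one_pow, C_neg, C_1] at this
  simpa using this

/-! ### Steps for quasi-invariants -/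

def opA (N m : ℕ) (p : R2) : R2 :=
  shiftOp (zP ^ N - wP ^ N) (C ((N : ℂ) * (2 * m + 1)) * (zP ^ N + wP ^ N)) p

def opB (N m n : ℕ) (p : R2) : R2 :=
  shiftOp ((zP ^ N) ^ 2 - (wP ^ N) ^ 2)
    (C ((N : ℂ) * (2 * (m + n + 1))) * ((zP ^ N) ^ 2 + (wP ^ N) ^ 2)
      + C ((N : ℂ) * (4 * (m - n))) * (zP ^ N * wP ^ N)) p

lemma Eu_sq (N : ℕ) : Eu ((zP ^ N) ^ 2 - (wP ^ N) ^ 2)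
    = C (2 * N : ℂ) * ((zP ^ N) ^ 2 + (wP ^ N) ^ 2) := by
  rw [map_sub, ← pow_mul, ← pow_mul, Eu_zpow, Eu_wpow]
  push_cast
  rw [C_mul, C_mul]
  ring

lemma qi_opA {N : ℕ} (hN : 1 ≤ N) (m : ℕ) (p : R2) (hp : IsQuasiInv N m 0 p) :
    IsQuasiInv N (m + 1) 0 (opA N m p) := by
  intro j hj
  have hu : eps N ^ j ≠ 0 := pow_ne_zero _ (eps_ne N)
  have h := hp j hj
  rw [dihRefl_eq] at h ⊢
  by_cases he : Even j
  · simp only [mult, he, if_true] at h ⊢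
    apply shiftOp_dvd _ hu _ _ _ _ _ _ (line_dvd_even hN he) _ h
    · rw [map_sub, reflU_zN hN, reflU_wN hN, he.neg_one_pow]; simp
    · rw [map_mul, map_add, reflU_zN hN, reflU_wN hN, he.neg_one_pow]; simp [add_comm]
    · rw [map_sub, Eu_zpow, Eu_wpow]
      convert dvd_zero _
      simp only [C_mul]
      push_cast
      simp only [map_add, map_mul, C_1]
      ring
  · simp only [mult, he, if_false]
    simpa using line_dvd _ hu _

lemma qi_opB {N : ℕ} (hN : 1 ≤ N) (m n : ℕ) (p : R2) (hp : IsQuasiInv N m n p) :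
    IsQuasiInv N (m + 1) (n + 1) (opB N m n p) := by
  intro j hj
  have hu : eps N ^ j ≠ 0 := pow_ne_zero _ (eps_ne N)
  have h := hp j hj
  rw [dihRefl_eq] at h ⊢
  have c2 : (C 2 : R2) = 2 := rfl
  have c4 : (C 4 : R2) = 4 := rfl
  have h1 : reflU (eps N ^ j) ((zP ^ N) ^ 2 - (wP ^ N) ^ 2) = -((zP ^ N) ^ 2 - (wP ^ N) ^ 2) := by
    rw [map_sub, map_pow, map_pow (reflU (eps N ^ j)) (wP ^ N), reflU_zN hN, reflU_wN hN, mul_pow,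
      mul_pow, ← C_pow, ← pow_mul, mul_comm j, pow_mul]
    simp
  have h2 : reflU (eps N ^ j) (C ((N : ℂ) * (2 * (m + n + 1))) * ((zP ^ N) ^ 2 + (wP ^ N) ^ 2)
      + C ((N : ℂ) * (4 * (m - n))) * (zP ^ N * wP ^ N)) =
      (C ((N : ℂ) * (2 * (m + n + 1))) * ((zP ^ N) ^ 2 + (wP ^ N) ^ 2)
      + C ((N : ℂ) * (4 * (m - n))) * (zP ^ N * wP ^ N)) := by
    rw [map_add, map_mul _ _ (zP ^ N * wP ^ N), map_mul _ (zP ^ N) (wP ^ N), map_mul, map_add,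
      map_pow, map_pow (reflU (eps N ^ j)) (wP ^ N),
      reflU_zN hN, reflU_wN hN, refl_C, refl_C]
    rcases neg_one_pow_eq_or ℂ j with e | e <;> rw [e] <;> simp <;> ring
  by_cases he : Even j
  · simp only [mult, he, if_true] at h ⊢
    apply shiftOp_dvd _ hu _ _ _ _ h1 h2 _ _ h
    · rw [sq_sub_sq]; exact (line_dvd_even hN he).mul_left _
    · rw [Eu_sq]
      refine ((line_dvd_even hN he).mul_right
        (C ((N : ℂ) * (2 * (m - n))) * (zP ^ N - wP ^ N))).trans (dvd_of_eq ?_)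
      push_cast
      simp only [map_add, map_mul, map_sub, C_1, c2, c4]
      ring
  · simp only [mult, he, if_false] at h ⊢
    apply shiftOp_dvd _ hu _ _ _ _ h1 h2 _ _ h
    · rw [sq_sub_sq]; exact (line_dvd_odd hN he).mul_right _
    · rw [Eu_sq]
      refine ((line_dvd_odd hN he).mul_right
        (C ((N : ℂ) * (2 * (n - m))) * (zP ^ N + wP ^ N))).trans (dvd_of_eq ?_)
      push_cast
      simp only [map_add, map_mul, map_sub, C_1, c2, c4]
      ring

lemma reflU_one_z (N : ℕ) : reflU 1 (zP ^ N) = wP ^ N := by simp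
lemma reflU_one_w (N : ℕ) : reflU 1 (wP ^ N) = zP ^ N := by simp

lemma reflU_opA (N m : ℕ) (p : R2) : reflU 1 (opA N m p) = opA N m (reflU 1 p) := by
  apply refl_shiftOp
  · rw [map_sub, reflU_one_z, reflU_one_w]; ring
  · rw [map_mul, map_add, reflU_one_z, reflU_one_w, refl_C]; ring

lemma reflU_opB (N m n : ℕ) (p : R2) : reflU 1 (opB N m n p) = opB N m n (reflU 1 p) := by
  apply refl_shiftOp
  · rw [map_sub, map_pow, map_pow _ (wP ^ N), reflU_one_z, reflU_one_w]; ring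
  · rw [map_add, map_mul _ _ (zP ^ N * wP ^ N), map_mul _ (zP ^ N) (wP ^ N), map_mul, map_add,
      map_pow, map_pow _ (wP ^ N),
      reflU_one_z, reflU_one_w, refl_C, refl_C]; ring

/-! ### The shape of the polynomials -/

def HasForm (N i M : ℕ) (c : ℝ) (p : R2) : Prop :=
  ∃ a : ℕ → ℝ, a 0 = c ∧
    p = ∑ s ∈ Finset.range (M + 1), C (a s : ℂ) * zP ^ ((M - s) * N + i) * wP ^ (N * s)

lemma HasForm.add {N i M : ℕ} {c c' : ℝ} {p p' : R2} (h : HasForm N i M c p)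
    (h' : HasForm N i M c' p') : HasForm N i M (c + c') (p + p') := by
  obtain ⟨a, rfl, rfl⟩ := h
  obtain ⟨b, rfl, rfl⟩ := h'
  refine ⟨fun s => a s + b s, rfl, ?_⟩
  rw [← Finset.sum_add_distrib]
  apply Finset.sum_congr rfl
  intro s _
  push_cast
  rw [C_add]; ring

lemma HasForm.smul {N i M : ℕ} {c : ℝ} {p : R2} (r : ℝ) (h : HasForm N i M c p) :
    HasForm N i M (r * c) (C (r : ℂ) * p) := by
  obtain ⟨a, rfl, rfl⟩ := h
  refine ⟨fun s => r * a s, rfl, ?_⟩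
  rw [Finset.mul_sum]
  apply Finset.sum_congr rfl
  intro s _
  push_cast
  rw [C_mul]; ring

lemma HasForm.zmul {N i M : ℕ} {c : ℝ} {p : R2} (h : HasForm N i M c p) :
    HasForm N i (M + 1) c (zP ^ N * p) := by
  obtain ⟨a, rfl, rfl⟩ := h
  refine ⟨fun s => if s ≤ M then a s else 0, by simp, ?_⟩
  rw [Finset.sum_range_succ _ (M + 1), Finset.mul_sum]
  simp only [Nat.not_succ_le_self, if_false, Complex.ofReal_zero, C_0, zero_mul,
    add_zero]
  apply Finset.sum_congr rfl
  intro s hs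
  have hs' : s ≤ M := by simpa [Nat.lt_succ_iff] using hs
  rw [if_pos hs', Nat.succ_sub hs', Nat.succ_mul]
  ring

lemma HasForm.wmul {N i M : ℕ} {c : ℝ} {p : R2} (h : HasForm N i M c p) :
    HasForm N i (M + 1) 0 (wP ^ N * p) := by
  obtain ⟨a, rfl, rfl⟩ := h
  refine ⟨fun s => if s = 0 then 0 else a (s - 1), by simp, ?_⟩
  rw [Finset.sum_range_succ' _ (M + 1), Finset.mul_sum]
  simp only [if_true, Complex.ofReal_zero, C_0, zero_mul, add_zero]
  apply Finset.sum_congr rfl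
  intro s hs
  rw [if_neg (Nat.succ_ne_zero s), Nat.add_sub_cancel, Nat.add_sub_add_right, Nat.mul_succ]
  ring

lemma HasForm.eu {N i M : ℕ} {c : ℝ} {p : R2} (h : HasForm N i M c p) :
    HasForm N i M ((M * N + i) * c) (Eu p) := by
  obtain ⟨a, rfl, rfl⟩ := h
  refine ⟨fun s => ((((M - s) * N + i : ℕ) : ℝ) - ((N * s : ℕ) : ℝ)) * a s, by simp, ?_⟩
  rw [map_sum]
  apply Finset.sum_congr rfl
  intro s _
  rw [Derivation.leibniz, Derivation.leibniz, Eu_zpow, Eu_wpow, Eu_C]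
  simp only [smul_eq_mul, Complex.ofReal_mul, Complex.ofReal_sub, Complex.ofReal_natCast, C_mul,
    map_sub]
  ring

lemma HasForm.opA {N i M : ℕ} {c : ℝ} {p : R2} (m : ℕ) (h : HasForm N i M c p) :
    HasForm N i (M + 1) (((M * N + i) - N * (2 * m + 1)) * c) (opA N m p) := by
  have h1 := h.eu.zmul
  have h2 := h.eu.wmul.smul (-1)
  have h3 := h.zmul.smul (-(N * (2 * m + 1)))
  have h4 := h.wmul.smul (-(N * (2 * m + 1)))
  convert ((h1.add h2).add h3).add h4 using 1
  · ring
  · simp only [_root_.opA, shiftOp]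
    push_cast
    simp only [map_neg, map_mul, map_add, C_1]
    ring

lemma HasForm.opB {N i M : ℕ} {c : ℝ} {p : R2} (m n : ℕ) (h : HasForm N i M c p) :
    HasForm N i (M + 2) (((M * N + i) - N * (2 * (m + n + 1))) * c) (opB N m n p) := by
  have h1 := h.eu.zmul.zmul
  have h2 := h.eu.wmul.wmul.smul (-1)
  have h3 := h.zmul.zmul.smul (-(N * (2 * (m + n + 1))))
  have h4 := h.wmul.wmul.smul (-(N * (2 * (m + n + 1))))
  have h5 := h.wmul.zmul.smul (-(N * (4 * (m - n))))
  convert (((h1.add h2).add h3).add h4).add h5 using 1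
  · ring
  · simp only [_root_.opB, shiftOp]
    push_cast
    simp only [map_neg, map_mul, map_add, map_sub, C_1]
    ring

def Good (N i m n : ℕ) : Prop :=
  ∃ (q : R2) (c : ℝ), c ≠ 0 ∧ HasForm N i (m + n) c q ∧ IsQuasiInv N m n q ∧
    IsQuasiInv N m n (reflU 1 q)

lemma qi_zero (N : ℕ) (p : R2) : IsQuasiInv N 0 0 p := by
  intro j _
  have hu : eps N ^ j ≠ 0 := pow_ne_zero _ (eps_ne N)
  rw [dihRefl_eq]
  simpa [mult] using line_dvd _ hu p

lemma coef_ne {N i : ℕ} (hi : ¬ N ∣ i) (k : ℕ) : (i : ℝ) - N * k ≠ 0 := by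
  intro h
  apply hi
  refine ⟨k, ?_⟩
  have : (i : ℝ) = ((N * k : ℕ) : ℝ) := by push_cast; linarith
  exact_mod_cast this

lemma good_m {N i : ℕ} (hN : 1 ≤ N) (hi : ¬ N ∣ i) (m : ℕ) : Good N i m 0 := by
  induction m with
  | zero =>
    refine ⟨zP ^ i, 1, one_ne_zero, ⟨fun _ => 1, rfl, by simp⟩, qi_zero _ _, qi_zero _ _⟩
  | succ m ih =>
    obtain ⟨q, c, hc, hf, h1, h2⟩ := ih
    refine ⟨opA N m q, _, ?_, hf.opA m, qi_opA hN m q h1, ?_⟩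
    · apply mul_ne_zero _ hc
      convert coef_ne hi (m + 1) using 1
      push_cast
      ring
    · rw [reflU_opA]; exact qi_opA hN m _ h2

lemma good_mn {N i : ℕ} (hN : 1 ≤ N) (hi : ¬ N ∣ i) (d n : ℕ) : Good N i (d + n) n := by
  induction n with
  | zero => exact good_m hN hi d
  | succ n ih =>
    obtain ⟨q, c, hc, hf, h1, h2⟩ := ih
    have hf' := hf.opB (d + n) n
    rw [show d + n + n + 2 = d + (n + 1) + (n + 1) by ring] at hf'
    refine ⟨opB N (d + n) n q, _, ?_, hf', qi_opB hN _ _ q h1, ?_⟩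
    rotate_left
    · rw [reflU_opB]; exact qi_opB hN _ _ _ h2
    · apply mul_ne_zero _ hc
      convert coef_ne hi (d + 2 * n + 2) using 1
      push_cast
      ring

lemma qi_C_mul {N m n : ℕ} (c : ℂ) {p : R2} (h : IsQuasiInv N m n p) :
    IsQuasiInv N m n (C c * p) := by
  intro j hj
  rw [dihRefl_eq, map_mul, refl_C, ← mul_sub, ← dihRefl_eq]
  exact (h j hj).mul_left _

lemma q2i_eq (N m n i : ℕ) (a : ℕ → ℝ) :
    q2i N m n i (fun s => (a s : ℂ)) = reflU 1 (q1i N m n i (fun s => (a s : ℂ))) := by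
  simp only [q2i, q1i, map_sum, map_mul, refl_C, reflU_one_z, reflU_one_w, Complex.conj_ofReal]

lemma exists_coeffs {N m n i : ℕ} (hN : 1 ≤ N) (hmn : n < m) (hi : ¬ N ∣ i) :
    ∃ a : ℕ → ℝ, a 0 = 1 ∧ IsQuasiInv N m n (q1i N m n i (fun s => (a s : ℂ))) ∧
      IsQuasiInv N m n (q2i N m n i (fun s => (a s : ℂ))) := by
  obtain ⟨d, rfl⟩ := Nat.exists_eq_add_of_le' hmn.le
  obtain ⟨q, c, hc, hf, h1, h2⟩ := good_mn hN hi d n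
  obtain ⟨a, ha, he⟩ := hf.smul c⁻¹
  refine ⟨a, by rw [ha, inv_mul_cancel₀ hc], ?_, ?_⟩
  · have : q1i N (d + n) n i (fun s => (a s : ℂ)) = C ((c⁻¹ : ℝ) : ℂ) * q := by
      rw [he]; rfl
    rw [this]; exact qi_C_mul _ h1
  · have : q1i N (d + n) n i (fun s => (a s : ℂ)) = C ((c⁻¹ : ℝ) : ℂ) * q := by
      rw [he]; rfl
    rw [q2i_eq, this, map_mul, refl_C]; exact qi_C_mul _ h2

/-! ### Closure properties of quasi-invariants -/

lemma eps_pow_mod {N : ℕ} (hN : 1 ≤ N) (j : ℕ) : eps N ^ (j % (2 * N)) = eps N ^ j := by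
  conv_rhs => rw [← Nat.mod_add_div j (2 * N), pow_add, pow_mul, (eps_prim hN).pow_eq_one,
    one_pow, mul_one]

lemma mult_mod {N : ℕ} (m n j : ℕ) : mult m n (j % (2 * N)) = mult m n j := by
  have : Even (j % (2 * N)) ↔ Even j := by
    rw [Nat.even_iff, Nat.even_iff, Nat.mod_mul_right_mod]
  simp only [mult, this]

lemma qi_all {N m n : ℕ} (hN : 1 ≤ N) {p : R2} (h : IsQuasiInv N m n p) (j : ℕ) :
    (zP - C (eps N ^ j) * wP) ^ (2 * mult m n j + 1) ∣ reflU (eps N ^ j) p - p := by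
  have := h (j % (2 * N)) (Nat.mod_lt _ (by omega))
  rwa [dihRefl_eq, eps_pow_mod hN, mult_mod] at this

lemma qi_add {N m n : ℕ} {p q : R2} (hp : IsQuasiInv N m n p) (hq : IsQuasiInv N m n q) :
    IsQuasiInv N m n (p + q) := by
  intro j hj
  rw [map_add, add_sub_add_comm]
  exact dvd_add (hp j hj) (hq j hj)

lemma qi_sum {N m n : ℕ} {ι : Type} (s : Finset ι) (f : ι → R2)
    (h : ∀ i ∈ s, IsQuasiInv N m n (f i)) : IsQuasiInv N m n (∑ i ∈ s, f i) := by
  intro j hj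
  rw [map_sum, ← Finset.sum_sub_distrib]
  exact Finset.dvd_sum (fun i hi => h i hi j hj)

lemma qi_rot {N m n : ℕ} (hN : 1 ≤ N) {p : R2} (h : IsQuasiInv N m n p) (t : ℕ) :
    IsQuasiInv N m n (rotU (eps N ^ t) p) := by
  intro j hj
  have h1 := qi_all hN h (j + 2 * t)
  have hu : eps N ^ t ≠ 0 := pow_ne_zero _ (eps_ne N)
  have h2 := map_dvd (rotU (eps N ^ t)) h1
  have hm : mult m n (j + 2 * t) = mult m n j := by
    have : Even (j + 2 * t) ↔ Even j := by
      rw [Nat.even_add]; simp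
    simp only [mult, this]
  have e1 : eps N ^ (j + 2 * t) * (eps N ^ t)⁻¹ = eps N ^ j * eps N ^ t := by
    rw [pow_add, two_mul, pow_add]; field_simp
  rw [map_sub, rot_refl, hm, e1, ← refl_rot, map_pow, map_sub, map_mul, rot_z, rot_w, rot_C,
    ← mul_assoc, ← C_mul, e1, C_mul, mul_comm (C (eps N ^ j)), mul_assoc, ← mul_sub, mul_pow] at h2
  rw [dihRefl_eq]
  exact (dvd_mul_left _ _).trans h2

/-! ### Isotypic components for the rotation group -/

def InComp (N : ℕ) (μ : ℂ) (p : R2) : Prop := rotU (eps N) p = C μ * p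

lemma InComp.pow {N : ℕ} {μ : ℂ} {p : R2} (h : InComp N μ p) (t : ℕ) :
    rotU (eps N ^ t) p = C (μ ^ t) * p := by
  induction t with
  | zero => simp [rot_one]
  | succ t ih =>
    rw [pow_succ', ← rot_rot, ih, map_mul, rot_C, h, ← mul_assoc, ← C_mul, pow_succ]

lemma InComp.add {N : ℕ} {μ : ℂ} {p q : R2} (h : InComp N μ p) (h' : InComp N μ q) :
    InComp N μ (p + q) := by
  unfold InComp at *
  rw [map_add, h, h', mul_add]

lemma InComp.mul {N : ℕ} {μ ν : ℂ} {p q : R2} (h : InComp N μ p) (h' : InComp N ν q) :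
    InComp N (μ * ν) (p * q) := by
  unfold InComp at *
  rw [map_mul, h, h', C_mul]; ring

lemma InComp.sum {N : ℕ} {μ : ℂ} {ι : Type} (s : Finset ι) (f : ι → R2)
    (h : ∀ i ∈ s, InComp N μ (f i)) : InComp N μ (∑ i ∈ s, f i) := by
  unfold InComp at *
  rw [map_sum, Finset.mul_sum]
  exact Finset.sum_congr rfl h

def proj (N : ℕ) (μ : ℂ) : R2 →ₗ[ℂ] R2 :=
  (1 / (2 * N) : ℂ) • ∑ t ∈ Finset.range (2 * N), ((μ⁻¹) ^ t) • (rotU (eps N ^ t)).toLinearMap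

lemma proj_apply (N : ℕ) (μ : ℂ) (p : R2) :
    proj N μ p = C (1 / (2 * N) : ℂ) *
      ∑ t ∈ Finset.range (2 * N), C ((μ⁻¹) ^ t) * rotU (eps N ^ t) p := by
  simp only [proj, LinearMap.smul_apply, LinearMap.sum_apply, AlgHom.toLinearMap_apply,
    MvPolynomial.smul_eq_C_mul]

lemma proj_of_comp {N : ℕ} {μ ν : ℂ} {p : R2} (h : InComp N ν p) :
    proj N μ p = C ((1 / (2 * N) : ℂ) * ∑ t ∈ Finset.range (2 * N), (μ⁻¹ * ν) ^ t) * p := by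
  rw [proj_apply, C_mul, map_sum, mul_assoc, Finset.sum_mul]
  congr 1
  apply Finset.sum_congr rfl
  intro t _
  rw [h.pow, ← mul_assoc, ← C_mul, mul_pow]

lemma proj_self {N : ℕ} (hN : 1 ≤ N) {μ : ℂ} (hμ : μ ≠ 0) {p : R2} (h : InComp N μ p) :
    proj N μ p = p := by
  have : (N : ℂ) ≠ 0 := by exact_mod_cast (by omega : N ≠ 0)
  rw [proj_of_comp h, inv_mul_cancel₀ hμ]
  simp only [one_pow, Finset.sum_const, Finset.card_range, nsmul_eq_mul, mul_one]
  push_cast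
  rw [one_div, inv_mul_cancel₀ (by simpa using this)]
  simp

lemma geom_zero {k : ℕ} {x : ℂ} (hx : x ^ k = 1) (h1 : x ≠ 1) :
    ∑ t ∈ Finset.range k, x ^ t = 0 := by
  rw [geom_sum_eq h1, hx]; simp

lemma proj_other {N : ℕ} {μ ν : ℂ} (hμ : μ ^ (2 * N) = 1) (hμ0 : μ ≠ 0) (hν : ν ^ (2 * N) = 1)
    (hne : ν ≠ μ) {p : R2} (h : InComp N ν p) : proj N μ p = 0 := by
  rw [proj_of_comp h, geom_zero]
  · simp
  · rw [mul_pow, inv_pow, hμ, hν]; simp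
  · intro h; apply hne
    field_simp at h
    exact h

lemma sum_shift {A : Type} [AddCommGroup A] (F : ℕ → A) (k : ℕ) (h : F k = F 0) :
    ∑ t ∈ Finset.range k, F t = ∑ t ∈ Finset.range k, F (t + 1) := by
  have h1 := Finset.sum_range_succ F k
  rw [Finset.sum_range_succ' F k, h] at h1
  exact (add_right_cancel h1).symm

lemma proj_inComp {N : ℕ} (hN : 1 ≤ N) {μ : ℂ} (hμ : μ ^ (2 * N) = 1) (hμ0 : μ ≠ 0) (p : R2) :
    InComp N μ (proj N μ p) := by
  unfold InComp
  rw [proj_apply, map_mul, rot_C, map_sum, mul_left_comm]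
  refine congrArg (fun x => C (1 / (2 * N) : ℂ) * x) ?_
  have h3 := sum_shift (fun t => C ((μ⁻¹) ^ t) * rotU (eps N ^ t) p) (2 * N)
    (by simp only [inv_pow, hμ, (eps_prim hN).pow_eq_one, pow_zero, inv_one])
  simp only [inv_pow] at h3 ⊢
  rw [h3, Finset.mul_sum]
  apply Finset.sum_congr rfl
  intro t _
  rw [map_mul, rot_C, rot_rot, ← mul_assoc, ← C_mul, ← pow_succ', pow_succ' μ, mul_inv,
    mul_inv_cancel_left₀ hμ0]

lemma proj_qi {N m n : ℕ} (hN : 1 ≤ N) (μ : ℂ) {p : R2} (h : IsQuasiInv N m n p) :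
    IsQuasiInv N m n (proj N μ p) := by
  rw [proj_apply]
  exact qi_C_mul _ (qi_sum _ _ (fun t _ => qi_C_mul _ (qi_rot hN h t)))

lemma proj_sum {N : ℕ} (hN : 1 ≤ N) (K : ℕ) (p : R2) :
    ∑ i ∈ Finset.range (2 * N), proj N (eps N ^ (K + i)) p = p := by
  have hN0 : (N : ℂ) ≠ 0 := by exact_mod_cast (by omega : N ≠ 0)
  simp only [proj_apply]
  rw [← Finset.mul_sum, Finset.sum_comm]
  have key : ∀ t ∈ Finset.range (2 * N), t ≠ 0 →
      ∑ i ∈ Finset.range (2 * N), C (((eps N ^ (K + i))⁻¹) ^ t) * rotU (eps N ^ t) p = 0 := by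
    intro t ht ht0
    rw [← Finset.sum_mul, ← map_sum]
    have : ∑ i ∈ Finset.range (2 * N), ((eps N ^ (K + i))⁻¹) ^ t
        = ((eps N ^ K)⁻¹) ^ t * ∑ i ∈ Finset.range (2 * N), ((eps N ^ t)⁻¹) ^ i := by
      rw [Finset.mul_sum]
      apply Finset.sum_congr rfl
      intro i _
      rw [pow_add, mul_inv, mul_pow]
      congr 1
      rw [inv_pow, inv_pow, ← pow_mul, ← pow_mul, mul_comm]
    rw [this, geom_zero]
    · simp
    · rw [inv_pow, ← pow_mul, mul_comm, pow_mul, (eps_prim hN).pow_eq_one]; simp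
    · intro h
      rw [inv_eq_one] at h
      have := (eps_prim hN).pow_ne_one_of_pos_of_lt ht0 (Finset.mem_range.mp ht)
      exact this h
  rw [Finset.sum_eq_single_of_mem 0 (Finset.mem_range.mpr (by omega)) key]
  simp only [pow_zero, rot_one, C_1, one_mul, Finset.sum_const, Finset.card_range, nsmul_eq_mul]
  rw [← mul_assoc, ← map_natCast (C : ℂ →+* R2), ← C_mul]
  push_cast
  rw [one_div, inv_mul_cancel₀ (by simpa using hN0)]
  simp

/-! ### Invariants -/

lemma zw_mem (N : ℕ) : zP * wP ∈ Sinv N := Algebra.subset_adjoin (by simp)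
lemma zNwN_mem (N : ℕ) : zP ^ (2 * N) + wP ^ (2 * N) ∈ Sinv N := Algebra.subset_adjoin (by simp)

lemma powersum_mem (N t : ℕ) :
    (zP ^ (2 * N)) ^ t + (wP ^ (2 * N)) ^ t ∈ Sinv N := by
  induction t using Nat.strong_induction_on with
  | _ t ih =>
    match t with
    | 0 => exact add_mem (by simp) (by simp)
    | 1 => simpa using zNwN_mem N
    | t + 2 =>
      have h1 := ih (t + 1) (by omega)
      have h0 := ih t (by omega)
      have : (zP ^ (2 * N)) ^ (t + 2) + (wP ^ (2 * N)) ^ (t + 2)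
          = (zP ^ (2 * N) + wP ^ (2 * N)) *
            ((zP ^ (2 * N)) ^ (t + 1) + (wP ^ (2 * N)) ^ (t + 1))
            - (zP * wP) ^ (2 * N) * ((zP ^ (2 * N)) ^ t + (wP ^ (2 * N)) ^ t) := by
        rw [mul_pow]; ring
      rw [this]
      exact sub_mem (mul_mem (zNwN_mem N) h1) (mul_mem (pow_mem (zw_mem N) _) h0)

lemma sym_mono_mem {N : ℕ} (hN : 1 ≤ N) (a b : ℕ) (h : eps N ^ a = eps N ^ b) :
    zP ^ a * wP ^ b + wP ^ a * zP ^ b ∈ Sinv N := by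
  wlog hab : b ≤ a generalizing a b
  · have := this b a h.symm (by omega)
    convert this using 1
    ring
  obtain ⟨c, rfl⟩ := Nat.exists_eq_add_of_le hab
  have hc : eps N ^ c = 1 := by
    rw [pow_add] at h
    exact mul_left_cancel₀ (pow_ne_zero b (eps_ne N)) (by rw [h, mul_one])
  obtain ⟨t, rfl⟩ := (eps_prim hN).dvd_of_pow_eq_one _ hc
  have : zP ^ (b + 2 * N * t) * wP ^ b + wP ^ (b + 2 * N * t) * zP ^ b
      = (zP * wP) ^ b * ((zP ^ (2 * N)) ^ t + (wP ^ (2 * N)) ^ t) := by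
    rw [mul_pow]; ring
  rw [this]
  exact mul_mem (pow_mem (zw_mem N) _) (powersum_mem N t)

lemma mono_eq (d : Fin 2 →₀ ℕ) (c : ℂ) :
    (monomial d c : R2) = C c * (zP ^ d 0 * wP ^ d 1) := by
  rw [monomial_eq, Finsupp.prod_fintype _ _ (by simp)]
  simp [zP, wP, Fin.prod_univ_two]

lemma inComp_z (N : ℕ) : InComp N (eps N) zP := by simp [InComp]
lemma inComp_w (N : ℕ) : InComp N (eps N)⁻¹ wP := by simp [InComp]
lemma inComp_C (N : ℕ) (c : ℂ) : InComp N 1 (C c) := by simp [InComp]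

lemma InComp.ppow {N : ℕ} {μ : ℂ} {p : R2} (h : InComp N μ p) (t : ℕ) :
    InComp N (μ ^ t) (p ^ t) := by
  unfold InComp at *
  rw [map_pow, h, mul_pow, C_pow]

lemma inComp_mono (N a b : ℕ) : InComp N (eps N ^ a * (eps N)⁻¹ ^ b) (zP ^ a * wP ^ b) :=
  ((inComp_z N).ppow a).mul ((inComp_w N).ppow b)

lemma average_mem {N : ℕ} (hN : 1 ≤ N) (p : R2) :
    proj N 1 p + reflU 1 (proj N 1 p) ∈ Sinv N := by
  induction p using MvPolynomial.induction_on' with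
  | add p q hp hq =>
    rw [map_add, map_add]
    convert add_mem hp hq using 1
    ring
  | monomial d c =>
    rw [mono_eq, ← smul_eq_C_mul, map_smul, map_smul, ← smul_add]
    apply Subalgebra.smul_mem
    have h := inComp_mono N (d 0) (d 1)
    by_cases he : eps N ^ d 0 = eps N ^ d 1
    · have : eps N ^ d 0 * (eps N)⁻¹ ^ d 1 = 1 := by
        rw [he, ← mul_pow, mul_inv_cancel₀ (eps_ne N), one_pow]
      rw [this] at h
      rw [proj_self hN one_ne_zero h, map_mul, reflU_one_z, reflU_one_w]
      exact sym_mono_mem hN _ _ he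
    · rw [proj_other (by simp) one_ne_zero _ _ h]
      · simp
      · rw [mul_pow, pow_right_comm, pow_right_comm _ (d 1), inv_pow, (eps_prim hN).pow_eq_one]
        simp
      · intro h; apply he
        rw [inv_pow] at h
        exact (mul_inv_eq_one₀ (pow_ne_zero _ (eps_ne N))).mp h

lemma mem_Sinv {N : ℕ} (hN : 1 ≤ N) {s : R2} (h1 : InComp N 1 s) (h2 : reflU 1 s = s) :
    s ∈ Sinv N := by
  have := average_mem hN s
  rw [proj_self hN one_ne_zero h1, h2] at this
  have h3 := Subalgebra.smul_mem _ this (1 / 2 : ℂ)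
  rw [← two_smul ℂ s, smul_smul] at h3
  simpa using h3

lemma Sinv_spec {N : ℕ} (hN : 1 ≤ N) {s : R2} (hs : s ∈ Sinv N) :
    InComp N 1 s ∧ reflU 1 s = s := by
  induction hs using Algebra.adjoin_induction with
  | mem x hx =>
    rcases hx with rfl | rfl
    · refine ⟨?_, by simp [mul_comm]⟩
      have := (inComp_z N).mul (inComp_w N)
      rwa [mul_inv_cancel₀ (eps_ne N)] at this
    · refine ⟨?_, by rw [map_add, reflU_one_z, reflU_one_w, add_comm]⟩
      have h1 := (inComp_z N).ppow (2 * N)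
      have h2 := (inComp_w N).ppow (2 * N)
      rw [inv_pow, (eps_prim hN).pow_eq_one, inv_one] at h2
      rw [(eps_prim hN).pow_eq_one] at h1
      exact h1.add h2
  | algebraMap r => exact ⟨inComp_C N r, refl_C 1 r⟩
  | add x y _ _ hx hy => exact ⟨hx.1.add hy.1, by rw [map_add, hx.2, hy.2]⟩
  | mul x y _ _ hx hy =>
    refine ⟨?_, by rw [map_mul, hx.2, hy.2]⟩
    have := hx.1.mul hy.1
    rwa [one_mul] at this

/-! ### The determinant -/

def Dt (f g : R2) : R2 := f * reflU 1 g - g * reflU 1 f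

def Del (N m n : ℕ) : R2 := (zP ^ N + wP ^ N) ^ (2 * n + 1) * (zP ^ N - wP ^ N) ^ (2 * m + 1)

lemma relPrime_zw : IsRelPrime zP wP := by
  intro d hz hw
  have hp : Irreducible (zP : R2) := (MvPolynomial.X_prime (R := ℂ) (i := (0 : Fin 2))).irreducible
  rcases hp.dvd_iff.mp hz with h | h
  · exact h
  · exfalso
    have : zP ∣ wP := h.dvd.trans hw
    rw [zP, wP, MvPolynomial.X_dvd_X] at this
    exact absurd this (by decide)

lemma isUnit_C {c : ℂ} (hc : c ≠ 0) : IsUnit (C c : R2) := (isUnit_iff_ne_zero.mpr hc).map C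

lemma relPrime_lines {u v : ℂ} (h : u ≠ v) : IsRelPrime (zP - C u * wP) (zP - C v * wP) := by
  intro d h1 h2
  apply relPrime_zw
  · have h3 : d ∣ C (u - v) * zP := by
      have := dvd_sub (h2.mul_left (C u)) (h1.mul_left (C v))
      convert this using 1
      rw [C_sub]; ring
    exact ((isUnit_C (sub_ne_zero.mpr h)).dvd_mul_left).mp h3
  · have h3 : d ∣ C (u - v) * wP := by
      have := dvd_sub h2 h1
      convert this using 1
      rw [C_sub]; ring
    exact ((isUnit_C (sub_ne_zero.mpr h)).dvd_mul_left).mp h3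

lemma relPrime_pm (N : ℕ) : IsRelPrime (zP ^ N + wP ^ N) (zP ^ N - wP ^ N) := by
  intro d h1 h2
  have hz : IsRelPrime (zP ^ N) (wP ^ N) := relPrime_zw.pow
  have c2 : (C 2 : R2) = 2 := rfl
  apply hz
  · have h3 : d ∣ C 2 * zP ^ N := by
      convert dvd_add h1 h2 using 1
      rw [c2]; ring
    exact ((isUnit_C two_ne_zero).dvd_mul_left).mp h3
  · have h3 : d ∣ C 2 * wP ^ N := by
      convert dvd_sub h1 h2 using 1
      rw [c2]; ring
    exact ((isUnit_C two_ne_zero).dvd_mul_left).mp h3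

/-- If all lines `z = ε^(2t+r) w` divide to power `k`, so does their product. -/
lemma prod_lines_dvd {N : ℕ} (hN : 1 ≤ N) (r k : ℕ) (d : R2)
    (h : ∀ t : ℕ, (zP - C (eps N ^ (2 * t + r)) * wP) ^ k ∣ d) :
    (zP ^ N - (C (eps N ^ r) * wP) ^ N) ^ k ∣ d := by
  have hp : IsPrimitiveRoot (eps N ^ 2) N := (eps_prim hN).pow (by omega) rfl
  have hp' : IsPrimitiveRoot (C (eps N ^ 2) : R2) N := hp.map_of_injective (C_injective _ _)
  rw [hp'.pow_sub_pow_eq_prod_sub_mul _ _ (by omega), ← Finset.prod_pow]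
  have hform : ∀ ζ ∈ Polynomial.nthRootsFinset N (1 : R2), ∃ t : ℕ, ζ = C (eps N ^ (2 * t)) := by
    intro ζ hζ
    rw [Polynomial.mem_nthRootsFinset (by omega)] at hζ
    have : NeZero N := ⟨by omega⟩
    obtain ⟨t, _, ht⟩ := hp'.eq_pow_of_pow_eq_one hζ
    exact ⟨t, by rw [← ht, ← C_pow, ← pow_mul]⟩
  apply Finset.prod_dvd_of_isRelPrime
  · intro ζ hζ ζ' hζ' hne
    obtain ⟨t, rfl⟩ := hform ζ hζ
    obtain ⟨t', rfl⟩ := hform ζ' hζ'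
    simp only [Function.onFun]
    apply IsRelPrime.pow
    rw [← mul_assoc, ← mul_assoc, ← C_mul, ← C_mul]
    apply relPrime_lines
    intro h
    apply hne
    rw [mul_right_cancel₀ (pow_ne_zero r (eps_ne N)) h]
  · intro ζ hζ
    obtain ⟨t, rfl⟩ := hform ζ hζ
    rw [← mul_assoc, ← C_mul, ← pow_add]
    exact h t

lemma Del_dvd {N : ℕ} (hN : 1 ≤ N) (m n : ℕ) (d : R2)
    (h : ∀ j : ℕ, (zP - C (eps N ^ j) * wP) ^ (2 * mult m n j + 1) ∣ d) : Del N m n ∣ d := by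
  apply IsRelPrime.mul_dvd (relPrime_pm N).pow
  · have := prod_lines_dvd hN 1 (2 * n + 1) d (fun t => by
      have := h (2 * t + 1)
      rwa [mult, if_neg (by simp)] at this)
    rwa [mul_pow, ← C_pow, pow_one, eps_pow_N hN, C_neg, C_1, neg_one_mul, sub_neg_eq_add] at this
  · have := prod_lines_dvd hN 0 (2 * m + 1) d (fun t => by
      have := h (2 * t + 0)
      rwa [mult, if_pos (by simp)] at this)
    rwa [pow_zero, C_1, one_mul] at this

lemma reflU_comp {N : ℕ} {μ : ℂ} {f : R2} (hf : InComp N μ f) (j : ℕ) :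
    reflU (eps N ^ j) f = C (μ ^ j) * reflU 1 f := by
  rw [← one_mul (eps N ^ j), ← refl_rot, hf.pow, map_mul, refl_C]

lemma Del_dvd_Dt {N m n : ℕ} (hN : 1 ≤ N) {μ : ℂ} (hμ : μ ≠ 0) {f g : R2} (hf : InComp N μ f)
    (hg : InComp N μ g) (qf : IsQuasiInv N m n f) (qg : IsQuasiInv N m n g) :
    Del N m n ∣ Dt f g := by
  apply Del_dvd hN
  intro j
  have h1 := qi_all hN qf j
  have h2 := qi_all hN qg j
  rw [reflU_comp hf] at h1
  rw [reflU_comp hg] at h2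
  have h3 := dvd_sub (h2.mul_left f) (h1.mul_left g)
  have e : f * (C (μ ^ j) * reflU 1 g - g) - g * (C (μ ^ j) * reflU 1 f - f)
      = C (μ ^ j) * Dt f g := by rw [Dt]; ring
  rw [e] at h3
  exact ((isUnit_C (pow_ne_zero j hμ)).dvd_mul_left).mp h3

lemma Del_ne {N : ℕ} (hN : 1 ≤ N) (m n : ℕ) : Del N m n ≠ 0 := by
  intro h
  have := congrArg (MvPolynomial.eval (fun k : Fin 2 => if k = 0 then (1:ℂ) else 0)) h
  have h0 : N ≠ 0 := by omega
  simp [Del, zP, wP] at this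
  rw [zero_pow h0] at this
  simp at this

lemma refl_Del (N m n : ℕ) : reflU 1 (Del N m n) = -Del N m n := by
  have h : wP ^ N - zP ^ N = -(zP ^ N - wP ^ N) := by ring
  rw [Del, map_mul, map_pow, map_pow, map_add, map_sub, reflU_one_z, reflU_one_w, h,
    Odd.neg_pow ⟨m, rfl⟩, add_comm]
  ring

lemma inComp_zN {N : ℕ} (hN : 1 ≤ N) : InComp N (-1) (zP ^ N) := by
  have := (inComp_z N).ppow N
  rwa [eps_pow_N hN] at this
lemma inComp_wN {N : ℕ} (hN : 1 ≤ N) : InComp N (-1) (wP ^ N) := by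
  have := (inComp_w N).ppow N
  rw [inv_pow, eps_pow_N hN] at this
  norm_num at this
  exact this

lemma inComp_q1 {N : ℕ} (hN : 1 ≤ N) (n : ℕ) :
    InComp N (-1) ((zP ^ N + wP ^ N) ^ (2 * n + 1)) := by
  have := ((inComp_zN hN).add (inComp_wN hN)).ppow (2 * n + 1)
  rwa [Odd.neg_one_pow ⟨n, rfl⟩] at this

lemma inComp_q2 {N : ℕ} (hN : 1 ≤ N) (n : ℕ) :
    InComp N (-1) ((zP ^ N - wP ^ N) ^ (2 * n + 1)) := by
  have h2 := (inComp_C N (-1)).mul (inComp_wN hN)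
  rw [one_mul] at h2
  have := ((inComp_zN hN).add h2).ppow (2 * n + 1)
  rw [Odd.neg_one_pow ⟨n, rfl⟩, C_neg, C_1, neg_one_mul, ← sub_eq_add_neg] at this
  exact this

lemma inComp_Del {N : ℕ} (hN : 1 ≤ N) (m n : ℕ) : InComp N 1 (Del N m n) := by
  have := (inComp_q1 hN n).mul (inComp_q2 hN m)
  rwa [neg_one_mul, neg_neg] at this

lemma InComp.refl {N : ℕ} {μ : ℂ} (hμ : μ ≠ 0) {f : R2} (hf : InComp N μ f) :
    InComp N μ⁻¹ (reflU 1 f) := by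
  unfold InComp
  have e : f = rotU (eps N)⁻¹ (rotU (eps N) f) := by
    rw [rot_rot, inv_mul_cancel₀ (eps_ne N), rot_one]; rfl
  rw [rot_refl, ← refl_rot, ]
  have h2 : rotU (eps N)⁻¹ f = C μ⁻¹ * f := by
    have : rotU (eps N)⁻¹ (rotU (eps N) f) = C μ * rotU (eps N)⁻¹ f := by
      rw [hf, map_mul, rot_C]
    rw [← e] at this
    rw [this, ← mul_assoc, ← C_mul, ← this, inv_mul_cancel₀ hμ, C_1, one_mul]
  rw [h2, map_mul, refl_C]

lemma inComp_Dt {N : ℕ} {μ : ℂ} (hμ : μ ≠ 0) {f g : R2} (hf : InComp N μ f)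
    (hg : InComp N μ g) : InComp N 1 (Dt f g) := by
  have h1 := hf.mul (hg.refl hμ)
  have h2 := (inComp_C N (-1)).mul (hg.mul (hf.refl hμ))
  rw [mul_inv_cancel₀ hμ] at h1 h2
  rw [one_mul] at h2
  have := h1.add h2
  rw [C_neg, C_1, neg_one_mul, ← sub_eq_add_neg] at this
  exact this

lemma refl_Dt (f g : R2) : reflU 1 (Dt f g) = - Dt f g := by
  rw [Dt, map_sub, map_mul, map_mul, refl_invol 1 one_ne_zero, refl_invol 1 one_ne_zero]; ring

/-- `Dt f g` is `Del` times an element of `S`. -/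
lemma Dt_eq {N m n : ℕ} (hN : 1 ≤ N) {μ : ℂ} (hμ : μ ≠ 0) {f g : R2} (hf : InComp N μ f)
    (hg : InComp N μ g) (qf : IsQuasiInv N m n f) (qg : IsQuasiInv N m n g) :
    ∃ s ∈ Sinv N, Dt f g = Del N m n * s := by
  obtain ⟨s, hs⟩ := Del_dvd_Dt hN hμ hf hg qf qg
  refine ⟨s, mem_Sinv hN ?_ ?_, hs⟩
  · have h1 := inComp_Dt hμ hf hg
    unfold InComp at h1 ⊢
    have h2 := inComp_Del hN m n
    unfold InComp at h2
    rw [hs, map_mul, h2, C_1, one_mul, one_mul] at h1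
    rw [C_1, one_mul]
    exact mul_left_cancel₀ (Del_ne hN m n) h1
  · have h1 := refl_Dt f g
    rw [hs, map_mul, refl_Del, neg_mul, neg_inj] at h1
    exact mul_left_cancel₀ (Del_ne hN m n) h1

lemma cramer_exists {N m n : ℕ} (hN : 1 ≤ N) {μ : ℂ} (hμ : μ ≠ 0) {f g p : R2}
    (hf : InComp N μ f) (hg : InComp N μ g) (hp : InComp N μ p)
    (qf : IsQuasiInv N m n f) (qg : IsQuasiInv N m n g) (qp : IsQuasiInv N m n p)
    {c : ℂ} (hc : c ≠ 0) (hD : Dt f g = C c * Del N m n) :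
    ∃ s ∈ Sinv N, ∃ s' ∈ Sinv N, p = s * f + s' * g := by
  obtain ⟨s, hs, h1⟩ := Dt_eq hN hμ hp hg qp qg
  obtain ⟨s', hs', h2⟩ := Dt_eq hN hμ hf hp qf qp
  have hCS : ∀ x : ℂ, C x ∈ Sinv N := fun x => (Sinv N).algebraMap_mem x
  refine ⟨C c⁻¹ * s, mul_mem (hCS _) hs, C c⁻¹ * s', mul_mem (hCS _) hs', ?_⟩
  have key : Dt f g * p = Dt p g * f + Dt f p * g := by simp only [Dt]; ring
  rw [hD, h1, h2] at key
  have k2 : C c * p = s * f + s' * g := by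
    apply mul_left_cancel₀ (Del_ne hN m n)
    linear_combination key
  have : p = C c⁻¹ * (C c * p) := by
    rw [← mul_assoc, ← C_mul, inv_mul_cancel₀ hc, C_1, one_mul]
  rw [this, k2]; ring

lemma cramer_unique {N m n : ℕ} (hN : 1 ≤ N) {f g : R2}
    {c : ℂ} (hc : c ≠ 0) (hD : Dt f g = C c * Del N m n) {s s' : R2} (hs : s ∈ Sinv N)
    (hs' : s' ∈ Sinv N) (h : s * f + s' * g = 0) : s = 0 ∧ s' = 0 := by
  have r1 := (Sinv_spec hN hs).2
  have r2 := (Sinv_spec hN hs').2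
  have h' := congrArg (reflU 1) h
  rw [map_add, map_mul, map_mul, r1, r2, map_zero] at h'
  have hD0 : Dt f g ≠ 0 := by
    rw [hD]; exact mul_ne_zero (isUnit_C hc).ne_zero (Del_ne hN m n)
  constructor
  · have : s * Dt f g = 0 := by rw [Dt]; linear_combination reflU 1 g * h - g * h'
    exact (mul_eq_zero.mp this).resolve_right hD0
  · have : s' * Dt f g = 0 := by rw [Dt]; linear_combination f * h' - reflU 1 f * h
    exact (mul_eq_zero.mp this).resolve_right hD0

/-! ### The basis elements -/

lemma qi_one (N m n : ℕ) : IsQuasiInv N m n 1 := by intro j _; simp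

lemma refl_plus {N : ℕ} (hN : 1 ≤ N) (j : ℕ) :
    reflU (eps N ^ j) (zP ^ N + wP ^ N) = C ((-1) ^ j) * (zP ^ N + wP ^ N) := by
  rw [map_add, reflU_zN hN, reflU_wN hN]; ring

lemma refl_minus {N : ℕ} (hN : 1 ≤ N) (j : ℕ) :
    reflU (eps N ^ j) (zP ^ N - wP ^ N) = - (C ((-1) ^ j) * (zP ^ N - wP ^ N)) := by
  rw [map_sub, reflU_zN hN, reflU_wN hN]; ring

lemma qi_q1 {N : ℕ} (hN : 1 ≤ N) (m n : ℕ) :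
    IsQuasiInv N m n ((zP ^ N + wP ^ N) ^ (2 * n + 1)) := by
  intro j _
  rw [dihRefl_eq, map_pow (reflU (eps N ^ j)), refl_plus hN]
  by_cases he : Even j
  · rw [he.neg_one_pow]; simp
  · have h := pow_dvd_pow_of_dvd (line_dvd_odd hN he) (2 * n + 1)
    rw [mult, if_neg he, mul_pow]
    exact dvd_sub (h.mul_left _) h

lemma qi_q2 {N : ℕ} (hN : 1 ≤ N) (m n : ℕ) :
    IsQuasiInv N m n ((zP ^ N - wP ^ N) ^ (2 * m + 1)) := by
  intro j _
  rw [dihRefl_eq, map_pow (reflU (eps N ^ j)), refl_minus hN]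
  by_cases he : Even j
  · have h := pow_dvd_pow_of_dvd (line_dvd_even hN he) (2 * m + 1)
    rw [mult, if_pos he, ← neg_mul, mul_pow]
    exact dvd_sub (h.mul_left _) h
  · rw [(Nat.not_even_iff_odd.mp he).neg_one_pow]; simp

lemma qi_Del {N : ℕ} (hN : 1 ≤ N) (m n : ℕ) : IsQuasiInv N m n (Del N m n) := by
  intro j _
  have hd : (zP - C (eps N ^ j) * wP) ^ (2 * mult m n j + 1) ∣ Del N m n := by
    by_cases he : Even j
    · rw [mult, if_pos he]
      exact (pow_dvd_pow_of_dvd (line_dvd_even hN he) _).mul_left _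
    · rw [mult, if_neg he]
      exact (pow_dvd_pow_of_dvd (line_dvd_odd hN he) _).mul_right _
  refine dvd_sub ?_ hd
  rw [dihRefl_eq, reflU_comp (inComp_Del hN m n), refl_Del, mul_neg]
  exact (hd.mul_left _).neg_right

lemma Dt_03 (N m n : ℕ) : Dt 1 (Del N m n) = C (-2) * Del N m n := by
  have c2 : (C 2 : R2) = 2 := rfl
  rw [Dt, refl_Del, C_neg, c2, map_one]; ring

lemma Dt_12 (N m n : ℕ) : Dt ((zP ^ N + wP ^ N) ^ (2 * n + 1)) ((zP ^ N - wP ^ N) ^ (2 * m + 1))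
    = C (-2) * Del N m n := by
  have c2 : (C 2 : R2) = 2 := rfl
  have h : wP ^ N - zP ^ N = -(zP ^ N - wP ^ N) := by ring
  rw [Dt, Del, C_neg, c2, map_pow, map_pow, map_add, map_sub, reflU_one_z, reflU_one_w, h,
    Odd.neg_pow ⟨m, rfl⟩, add_comm (wP ^ N)]
  ring

lemma inComp_q1i {N : ℕ} (hN : 1 ≤ N) (m n i : ℕ) (a : ℕ → ℂ) :
    InComp N (eps N ^ ((m + n) * N + i)) (q1i N m n i a) := by
  apply InComp.sum
  intro s hs
  have hs' : s ≤ m + n := by simpa [Nat.lt_succ_iff] using hs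
  have h := (inComp_C N (a s)).mul (inComp_mono N ((m + n - s) * N + i) (N * s))
  rw [mul_assoc]
  convert h using 1
  rw [one_mul, inv_pow, eq_mul_inv_iff_mul_eq₀ (pow_ne_zero _ (eps_ne N)), ← pow_add]
  obtain ⟨t, ht⟩ := Nat.exists_eq_add_of_le hs'
  rw [ht, Nat.add_sub_cancel_left, show (s + t) * N + i + N * s = (t * N + i) + 2 * N * s by ring,
    pow_add, pow_mul, (eps_prim hN).pow_eq_one]
  simp

lemma inComp_q2i {N : ℕ} (hN : 1 ≤ N) (m n i : ℕ) (hi : i < 2 * N) (a : ℕ → ℝ) :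
    InComp N (eps N ^ ((m + n) * N + i)) (q2i N m n (2 * N - i) (fun s => (a s : ℂ))) := by
  rw [q2i_eq]
  have h := (inComp_q1i hN m n (2 * N - i) (fun s => (a s : ℂ))).refl (pow_ne_zero _ (eps_ne N))
  convert h using 1
  apply eq_inv_of_mul_eq_one_left
  rw [← pow_add,
    show (m + n) * N + i + ((m + n) * N + (2 * N - i)) = 2 * N * (m + n + 1) by
      have : i + (2 * N - i) = 2 * N := by omega
      linear_combination this, pow_mul, (eps_prim hN).pow_eq_one, one_pow]

lemma homog_q1i (N m n i : ℕ) (a : ℕ → ℂ) :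
    (q1i N m n i a).IsHomogeneous ((m + n) * N + i) := by
  apply IsHomogeneous.sum
  intro s hs
  have hs' : s ≤ m + n := by simpa [Nat.lt_succ_iff] using hs
  have h := ((isHomogeneous_C (Fin 2) (a s)).mul
    ((isHomogeneous_X ℂ (0 : Fin 2)).pow ((m + n - s) * N + i))).mul
    ((isHomogeneous_X ℂ (1 : Fin 2)).pow (N * s))
  obtain ⟨t, ht⟩ := Nat.exists_eq_add_of_le hs'
  have e : (m + n) * N + i = 0 + 1 * ((m + n - s) * N + i) + 1 * (N * s) := by
    rw [ht, Nat.add_sub_cancel_left]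
    ring
  rw [e]
  exact h

lemma homog_q2i (N m n i : ℕ) (a : ℕ → ℂ) :
    (q2i N m n i a).IsHomogeneous ((m + n) * N + i) := by
  apply IsHomogeneous.sum
  intro s hs
  have hs' : s ≤ m + n := by simpa [Nat.lt_succ_iff] using hs
  have h := ((isHomogeneous_C (Fin 2) (starRingEnd ℂ (a s))).mul
    ((isHomogeneous_X ℂ (1 : Fin 2)).pow ((m + n - s) * N + i))).mul
    ((isHomogeneous_X ℂ (0 : Fin 2)).pow (N * s))
  obtain ⟨t, ht⟩ := Nat.exists_eq_add_of_le hs'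
  have e : (m + n) * N + i = 0 + 1 * ((m + n - s) * N + i) + 1 * (N * s) := by
    rw [ht, Nat.add_sub_cancel_left]
    ring
  rw [e]
  exact h

lemma homog_Del (N m n : ℕ) : (Del N m n).IsHomogeneous ((2 * (m + n) + 2) * N) := by
  have hz := (isHomogeneous_X ℂ (0 : Fin 2)).pow N
  have hw := (isHomogeneous_X ℂ (1 : Fin 2)).pow N
  have h := ((hz.add hw).pow (2 * n + 1)).mul ((hz.sub hw).pow (2 * m + 1))
  have e : (2 * (m + n) + 2) * N = 1 * N * (2 * n + 1) + 1 * N * (2 * m + 1) := by ring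
  rw [e]
  exact h

def ev10 : R2 →+* ℂ := MvPolynomial.eval (fun k : Fin 2 => if k = 0 then (1:ℂ) else 0)
lemma ev10_z : ev10 zP = 1 := by simp [ev10, zP]
lemma ev10_w : ev10 wP = 0 := by simp [ev10, wP]
lemma ev10_C (c : ℂ) : ev10 (C c) = c := by simp [ev10]

lemma ev10_q1i {N : ℕ} (hN : 1 ≤ N) (m n i : ℕ) (a : ℕ → ℂ) : ev10 (q1i N m n i a) = a 0 := by
  rw [q1i, map_sum, Finset.sum_eq_single_of_mem 0 (by simp)]
  · simp [ev10_z, ev10_C]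
  · intro s _ hs
    rw [map_mul, map_pow, ev10_w, zero_pow (Nat.mul_ne_zero (by omega) hs), mul_zero]

lemma ev10_q2i (N m n i : ℕ) (hi : 1 ≤ i) (a : ℕ → ℂ) : ev10 (q2i N m n i a) = 0 := by
  rw [q2i, map_sum]
  apply Finset.sum_eq_zero
  intro s _
  rw [map_mul, map_mul, map_pow, map_pow, ev10_w, zero_pow (by omega)]
  simp

lemma Dt_i {N : ℕ} (hN : 1 ≤ N) (m n i : ℕ) (hi1 : 1 ≤ i) (hi : i < 2 * N) (a b : ℕ → ℝ)
    (ha : a 0 = 1) (hb : b 0 = 1)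
    (qf : IsQuasiInv N m n (q1i N m n i (fun s => (a s : ℂ))))
    (qg : IsQuasiInv N m n (q2i N m n (2 * N - i) (fun s => (b s : ℂ)))) :
    ∃ c : ℂ, c ≠ 0 ∧ Dt (q1i N m n i (fun s => (a s : ℂ)))
      (q2i N m n (2 * N - i) (fun s => (b s : ℂ))) = C c * Del N m n := by
  have hμ : eps N ^ ((m + n) * N + i) ≠ 0 := pow_ne_zero _ (eps_ne N)
  obtain ⟨r, hr⟩ := Del_dvd_Dt hN hμ (inComp_q1i hN m n i _) (inComp_q2i hN m n i hi b) qf qg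
  have hga : reflU 1 (q1i N m n i (fun s => (a s : ℂ))) = q2i N m n i (fun s => (a s : ℂ)) :=
    (q2i_eq _ _ _ _ _).symm
  have hgb : reflU 1 (q2i N m n (2 * N - i) (fun s => (b s : ℂ)))
      = q1i N m n (2 * N - i) (fun s => (b s : ℂ)) := by
    rw [q2i_eq, refl_invol 1 one_ne_zero]
  have hne : Dt (q1i N m n i (fun s => (a s : ℂ)))
      (q2i N m n (2 * N - i) (fun s => (b s : ℂ))) ≠ 0 := by
    intro h
    have h2 := congrArg ev10 h
    rw [Dt, hga, hgb, map_sub, map_mul, map_mul, ev10_q1i hN, ev10_q1i hN,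
      ev10_q2i _ _ _ _ hi1] at h2
    simp [ha, hb] at h2
  have hhom : (Dt (q1i N m n i (fun s => (a s : ℂ)))
      (q2i N m n (2 * N - i) (fun s => (b s : ℂ)))).IsHomogeneous ((2 * (m + n) + 2) * N) := by
    rw [Dt, hga, hgb]
    have e : i + (2 * N - i) = 2 * N := by omega
    have h1 := (homog_q1i N m n i (fun s => (a s : ℂ))).mul
      (homog_q1i N m n (2 * N - i) (fun s => (b s : ℂ)))
    have h2 := (homog_q2i N m n (2 * N - i) (fun s => (b s : ℂ))).mul
      (homog_q2i N m n i (fun s => (a s : ℂ)))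
    rw [show (m + n) * N + i + ((m + n) * N + (2 * N - i)) = (2 * (m + n) + 2) * N by
      linear_combination e] at h1
    rw [show (m + n) * N + (2 * N - i) + ((m + n) * N + i) = (2 * (m + n) + 2) * N by
      linear_combination e] at h2
    exact h1.sub h2
  have hr0 : r ≠ 0 := by
    rintro rfl
    exact hne (by rw [hr, mul_zero])
  have hdeg := totalDegree_mul_of_isDomain (Del_ne hN m n) hr0
  rw [← hr, hhom.totalDegree hne, (homog_Del N m n).totalDegree (Del_ne hN m n)] at hdeg
  have hr1 : r.totalDegree = 0 := by omega
  rw [totalDegree_eq_zero_iff_eq_C] at hr1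
  refine ⟨coeff 0 r, ?_, ?_⟩
  · intro h
    rw [h, C_0] at hr1
    exact hr0 hr1
  · rw [← hr1, hr, mul_comm]

/-! ### Assembling the decomposition -/

lemma mem_idx {N i : ℕ} : i ∈ idxSet N ↔ i < 2 * N ∧ 1 ≤ i ∧ i ≠ N := by
  simp [idxSet]

lemma idx_not_dvd {N i : ℕ} (hi : i ∈ idxSet N) : ¬ N ∣ i := by
  rw [mem_idx] at hi
  rintro ⟨k, rfl⟩
  obtain ⟨h1, h2, h3⟩ := hi
  have hk : k < 2 := by
    by_contra h
    have : N * 2 ≤ N * k := Nat.mul_le_mul_left _ (by omega)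
    omega
  interval_cases k <;> omega

lemma idx_symm {N i : ℕ} (hi : i ∈ idxSet N) : 2 * N - i ∈ idxSet N := by
  rw [mem_idx] at *
  omega

lemma sum_idx_symm (N : ℕ) (F : ℕ → R2) :
    ∑ i ∈ idxSet N, F (2 * N - i) = ∑ i ∈ idxSet N, F i := by
  apply Finset.sum_nbij' (fun i => 2 * N - i) (fun i => 2 * N - i)
  · intro i hi; exact idx_symm hi
  · intro i hi; exact idx_symm hi
  · intro i hi; rw [mem_idx] at hi; omega
  · intro i hi; rw [mem_idx] at hi; omega
  · intro i _; rfl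

lemma eps_pow_root {N : ℕ} (hN : 1 ≤ N) (k : ℕ) : (eps N ^ k) ^ (2 * N) = 1 := by
  rw [← pow_mul, mul_comm, pow_mul, (eps_prim hN).pow_eq_one, one_pow]

lemma mu_sq_ne {N : ℕ} (hN : 1 ≤ N) (M : ℕ) {i : ℕ} (hi : i ∈ idxSet N) :
    (eps N ^ (M * N + i)) ^ 2 ≠ 1 := by
  intro h
  rw [pow_add, mul_pow, mul_comm M, pow_mul, eps_pow_N hN, ← pow_mul, mul_comm M, pow_mul,
    neg_one_sq, one_pow, one_mul, ← pow_mul] at h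
  have h2 := (eps_prim hN).dvd_of_pow_eq_one _ h
  rw [mul_comm] at h2
  exact idx_not_dvd hi (Nat.dvd_of_mul_dvd_mul_right two_pos (by rwa [mul_comm N, mul_comm i,
    mul_comm 2 i, mul_comm i] at *))

lemma mu_inj {N : ℕ} (hN : 1 ≤ N) (K : ℕ) {i j : ℕ} (hi : i < 2 * N) (hj : j < 2 * N)
    (h : eps N ^ (K + i) = eps N ^ (K + j)) : i = j := by
  rw [pow_add, pow_add] at h
  exact (eps_prim hN).pow_inj hi hj (mul_left_cancel₀ (pow_ne_zero _ (eps_ne N)) h)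

/-- Components are independent. -/
lemma comps_zero {N : ℕ} (hN : 1 ≤ N) (M : ℕ) {A B : R2} {E : ℕ → R2} (hA : InComp N 1 A)
    (hB : InComp N (-1) B) (hE : ∀ i ∈ idxSet N, InComp N (eps N ^ (M * N + i)) (E i))
    (h : A + B + ∑ i ∈ idxSet N, E i = 0) : A = 0 ∧ B = 0 ∧ ∀ i ∈ idxSet N, E i = 0 := by
  have r1 : (1 : ℂ) ^ (2 * N) = 1 := one_pow _
  have r2 : (-1 : ℂ) ^ (2 * N) = 1 := by rw [pow_mul, neg_one_sq, one_pow]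
  have n1 : ∀ i ∈ idxSet N, eps N ^ (M * N + i) ≠ 1 := by
    intro i hi h; apply mu_sq_ne hN M hi; rw [h, one_pow]
  have n2 : ∀ i ∈ idxSet N, eps N ^ (M * N + i) ≠ -1 := by
    intro i hi h; apply mu_sq_ne hN M hi; rw [h, neg_one_sq]
  have n0 : ∀ k, eps N ^ k ≠ 0 := fun k => pow_ne_zero _ (eps_ne N)
  have m1 : (-1 : ℂ) ≠ 1 := by norm_num
  refine ⟨?_, ?_, ?_⟩
  · have := congrArg (proj N 1) h
    rw [map_add, map_add, map_sum, map_zero, proj_self hN one_ne_zero hA,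
      proj_other r1 one_ne_zero r2 m1 hB, Finset.sum_eq_zero] at this
    · simpa using this
    · intro i hi
      exact proj_other r1 one_ne_zero (eps_pow_root hN _) (n1 i hi) (hE i hi)
  · have := congrArg (proj N (-1)) h
    rw [map_add, map_add, map_sum, map_zero, proj_self hN (by norm_num) hB,
      proj_other r2 (by norm_num) r1 m1.symm hA, Finset.sum_eq_zero] at this
    · simpa using this
    · intro i hi
      exact proj_other r2 (by norm_num) (eps_pow_root hN _) (n2 i hi) (hE i hi)
  · intro j hj
    have := congrArg (proj N (eps N ^ (M * N + j))) h
    rw [map_add, map_add, map_sum, map_zero,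
      proj_other (eps_pow_root hN _) (n0 _) r1 (n1 j hj).symm hA,
      proj_other (eps_pow_root hN _) (n0 _) r2 (n2 j hj).symm hB,
      Finset.sum_eq_single_of_mem j hj, proj_self hN (n0 _) (hE j hj)] at this
    · simpa using this
    · intro i hi hij
      refine proj_other (eps_pow_root hN _) (n0 _) (eps_pow_root hN _) ?_ (hE i hi)
      intro h
      exact hij (mu_inj hN _ (mem_idx.mp hi).1 (mem_idx.mp hj).1 h)

lemma proj_decomp {N : ℕ} (hN : 1 ≤ N) (M : ℕ) (p : R2) :
    p = proj N 1 p + proj N (-1) p + ∑ i ∈ idxSet N, proj N (eps N ^ (M * N + i)) p := by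
  have h := proj_sum hN (M * N) p
  have hr : Finset.range (2 * N) = insert 0 (insert N (idxSet N)) := by
    ext i
    simp only [Finset.mem_insert, mem_idx, Finset.mem_range]
    omega
  rw [hr, Finset.sum_insert (by simp [mem_idx]; omega), Finset.sum_insert (by simp [mem_idx]),
    ← add_assoc] at h
  conv_lhs => rw [← h]
  congr 1
  rw [add_zero, pow_add, mul_comm M, pow_mul, eps_pow_N hN]
  rcases neg_one_pow_eq_or ℂ M with h | h
  · rw [h, one_mul]
  · rw [h, neg_mul_neg, one_mul, add_comm]

/-- The four-plus-pairs combination. -/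
lemma main_exists {N m n : ℕ} (hN : 1 ≤ N) (b : ℕ → ℕ → ℝ)
    (hb : ∀ i ∈ idxSet N, b i 0 = 1 ∧
      IsQuasiInv N m n (q1i N m n i (fun s => (b i s : ℂ))) ∧
      IsQuasiInv N m n (q2i N m n i (fun s => (b i s : ℂ)))) (p : R2) (hp : IsQuasiInv N m n p) :
    ∃ s0 ∈ Sinv N, ∃ s1 ∈ Sinv N, ∃ s2 ∈ Sinv N, ∃ s3 ∈ Sinv N, ∃ t1 t2 : ℕ → R2,
      (∀ i ∈ idxSet N, t1 i ∈ Sinv N ∧ t2 i ∈ Sinv N) ∧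
      (∀ i ∉ idxSet N, t1 i = 0 ∧ t2 i = 0) ∧
      p = s0 * 1 + s1 * (zP ^ N + wP ^ N) ^ (2 * n + 1) + s2 * (zP ^ N - wP ^ N) ^ (2 * m + 1)
        + s3 * ((zP ^ N + wP ^ N) ^ (2 * n + 1) * (zP ^ N - wP ^ N) ^ (2 * m + 1))
        + ∑ i ∈ idxSet N, (t1 i * q1i N m n i (fun s => (b i s : ℂ))
            + t2 i * q2i N m n i (fun s => (b i s : ℂ))) := by
  classical
  have r1 : (1 : ℂ) ^ (2 * N) = 1 := one_pow _
  have r2 : (-1 : ℂ) ^ (2 * N) = 1 := by rw [pow_mul, neg_one_sq, one_pow]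
  have n2 : (-1 : ℂ) ≠ 0 := by norm_num
  have n22 : (-2 : ℂ) ≠ 0 := by norm_num
  have hone : InComp N 1 (1 : R2) := by unfold InComp; simp
  obtain ⟨s0, hs0, s3, hs3, e03⟩ := cramer_exists hN one_ne_zero hone (inComp_Del hN m n)
    (proj_inComp hN r1 one_ne_zero p) (qi_one N m n) (qi_Del hN m n) (proj_qi hN 1 hp)
    n22 (Dt_03 N m n)
  obtain ⟨s1, hs1, s2, hs2, e12⟩ := cramer_exists hN n2 (inComp_q1 hN n) (inComp_q2 hN m)
    (proj_inComp hN r2 n2 p) (qi_q1 hN m n) (qi_q2 hN m n) (proj_qi hN (-1) hp)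
    n22 (Dt_12 N m n)
  have hpair : ∀ i : ℕ, ∃ u v : R2, i ∈ idxSet N → u ∈ Sinv N ∧ v ∈ Sinv N ∧
      proj N (eps N ^ ((m + n) * N + i)) p = u * q1i N m n i (fun s => (b i s : ℂ))
        + v * q2i N m n (2 * N - i) (fun s => (b (2 * N - i) s : ℂ)) := by
    intro i
    by_cases hi : i ∈ idxSet N
    · have hi' := mem_idx.mp hi
      obtain ⟨b1, b2, b3⟩ := hb i hi
      obtain ⟨c1, c2, c3⟩ := hb _ (idx_symm hi)
      have n0 : eps N ^ ((m + n) * N + i) ≠ 0 := pow_ne_zero _ (eps_ne N)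
      obtain ⟨c, hc, hD⟩ := Dt_i hN m n i hi'.2.1 hi'.1 (b i) (b (2 * N - i)) b1 c1 b2 c3
      obtain ⟨u, hu, v, hv, e⟩ := cramer_exists hN n0 (inComp_q1i hN m n i _)
        (inComp_q2i hN m n i hi'.1 _) (proj_inComp hN (eps_pow_root hN _) n0 p) b2 c3
        (proj_qi hN _ hp) hc hD
      exact ⟨u, v, fun _ => ⟨hu, hv, e⟩⟩
    · exact ⟨0, 0, fun h => absurd h hi⟩
  choose u v huv using hpair
  refine ⟨s0, hs0, s1, hs1, s2, hs2, s3, hs3, fun i => if i ∈ idxSet N then u i else 0,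
    fun i => if i ∈ idxSet N then v (2 * N - i) else 0, ?_, ?_, ?_⟩
  · intro i hi
    simp only [hi, if_true]
    exact ⟨(huv i hi).1, (huv _ (idx_symm hi)).2.1⟩
  · intro i hi
    simp only [hi, if_false, and_self]
  · have hsum : ∑ i ∈ idxSet N, ((if i ∈ idxSet N then u i else 0) * q1i N m n i (fun s => (b i s : ℂ))
            + (if i ∈ idxSet N then v (2 * N - i) else 0) * q2i N m n i (fun s => (b i s : ℂ)))
        = ∑ i ∈ idxSet N, proj N (eps N ^ ((m + n) * N + i)) p := by
      rw [Finset.sum_congr rfl (fun i hi => (huv i hi).2.2), Finset.sum_add_distrib,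
        Finset.sum_add_distrib]
      refine congrArg₂ (· + ·) ?_ ?_
      · apply Finset.sum_congr rfl
        intro i hi
        rw [if_pos hi]
      · rw [← sum_idx_symm N (fun i => (if i ∈ idxSet N then v (2 * N - i) else 0)
          * q2i N m n i (fun s => (b i s : ℂ)))]
        apply Finset.sum_congr rfl
        intro i hi
        have hi' := mem_idx.mp hi
        rw [if_pos (idx_symm hi), show 2 * N - (2 * N - i) = i by omega]
    rw [hsum]
    refine (proj_decomp hN (m + n) p).trans ?_
    rw [e03, e12, Del]
    ring

lemma main_indep {N m n : ℕ} (hN : 1 ≤ N) (b : ℕ → ℕ → ℝ)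
    (hb : ∀ i ∈ idxSet N, b i 0 = 1 ∧
      IsQuasiInv N m n (q1i N m n i (fun s => (b i s : ℂ))) ∧
      IsQuasiInv N m n (q2i N m n i (fun s => (b i s : ℂ))))
    {s0 s1 s2 s3 : R2} {t1 t2 : ℕ → R2} (h0 : s0 ∈ Sinv N) (h1 : s1 ∈ Sinv N)
    (h2 : s2 ∈ Sinv N) (h3 : s3 ∈ Sinv N) (ht : ∀ i ∈ idxSet N, t1 i ∈ Sinv N ∧ t2 i ∈ Sinv N)
    (h : s0 * 1 + s1 * (zP ^ N + wP ^ N) ^ (2 * n + 1) + s2 * (zP ^ N - wP ^ N) ^ (2 * m + 1)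
        + s3 * ((zP ^ N + wP ^ N) ^ (2 * n + 1) * (zP ^ N - wP ^ N) ^ (2 * m + 1))
        + ∑ i ∈ idxSet N, (t1 i * q1i N m n i (fun s => (b i s : ℂ))
            + t2 i * q2i N m n i (fun s => (b i s : ℂ))) = 0) :
    s0 = 0 ∧ s1 = 0 ∧ s2 = 0 ∧ s3 = 0 ∧ ∀ i ∈ idxSet N, t1 i = 0 ∧ t2 i = 0 := by
  have n22 : (-2 : ℂ) ≠ 0 := by norm_num
  have hone : InComp N 1 (1 : R2) := by unfold InComp; simp
  have smul : ∀ {s f : R2} {μ : ℂ}, s ∈ Sinv N → InComp N μ f → InComp N μ (s * f) := by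
    intro s f μ hs hf
    have := (Sinv_spec hN hs).1.mul hf
    rwa [one_mul] at this
  have hA := (smul h0 hone).add (smul h3 (inComp_Del hN m n))
  have hB := (smul h1 (inComp_q1 hN n)).add (smul h2 (inComp_q2 hN m))
  have hE : ∀ i ∈ idxSet N, InComp N (eps N ^ ((m + n) * N + i))
      (t1 i * q1i N m n i (fun s => (b i s : ℂ))
        + t2 (2 * N - i) * q2i N m n (2 * N - i) (fun s => (b (2 * N - i) s : ℂ))) := by
    intro i hi
    exact (smul (ht i hi).1 (inComp_q1i hN m n i _)).add
      (smul (ht _ (idx_symm hi)).2 (inComp_q2i hN m n i (mem_idx.mp hi).1 _))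
  obtain ⟨zA, zB, zE⟩ := comps_zero hN (m + n) hA hB hE (by
    rw [← h, Finset.sum_add_distrib, Finset.sum_add_distrib,
      sum_idx_symm N (fun i => t2 i * q2i N m n i (fun s => (b i s : ℂ))), Del]
    ring)
  obtain ⟨z0, z3⟩ := cramer_unique hN n22 (Dt_03 N m n) h0 h3 zA
  obtain ⟨z1, z2⟩ := cramer_unique hN n22 (Dt_12 N m n) h1 h2 zB
  have hz : ∀ i ∈ idxSet N, t1 i = 0 ∧ t2 (2 * N - i) = 0 := by
    intro i hi
    have hi' := mem_idx.mp hi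
    obtain ⟨b1, b2, b3⟩ := hb i hi
    obtain ⟨c1, c2, c3⟩ := hb _ (idx_symm hi)
    obtain ⟨c, hc, hD⟩ := Dt_i hN m n i hi'.2.1 hi'.1 (b i) (b (2 * N - i)) b1 c1 b2 c3
    exact cramer_unique hN hc hD (ht i hi).1 (ht _ (idx_symm hi)).2 (zE i hi)
  refine ⟨z0, z1, z2, z3, fun i hi => ⟨(hz i hi).1, ?_⟩⟩
  have := (hz _ (idx_symm hi)).2
  rwa [show 2 * N - (2 * N - i) = i by have := mem_idx.mp hi; omega] at this

theorem free_basis_of_quasiInvariants (N m n : ℕ) (hN : 1 ≤ N) (hmn : n < m) :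
    ∃ a : ℕ → ℕ → ℂ,
      (∀ i ∈ idxSet N, a i 0 = 1 ∧
        IsQuasiInv N m n (q1i N m n i (a i)) ∧ IsQuasiInv N m n (q2i N m n i (a i))) ∧
      ∀ p : R2, IsQuasiInv N m n p →
        ∃! c : (R2 × R2 × R2 × R2) × (ℕ → R2) × (ℕ → R2),
          c.1.1 ∈ Sinv N ∧ c.1.2.1 ∈ Sinv N ∧ c.1.2.2.1 ∈ Sinv N ∧ c.1.2.2.2 ∈ Sinv N ∧
          (∀ i ∈ idxSet N, c.2.1 i ∈ Sinv N ∧ c.2.2 i ∈ Sinv N) ∧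
          (∀ i ∉ idxSet N, c.2.1 i = 0 ∧ c.2.2 i = 0) ∧
          p = c.1.1 * 1
              + c.1.2.1 * (zP ^ N + wP ^ N) ^ (2 * n + 1)
              + c.1.2.2.1 * (zP ^ N - wP ^ N) ^ (2 * m + 1)
              + c.1.2.2.2 * ((zP ^ N + wP ^ N) ^ (2 * n + 1) * (zP ^ N - wP ^ N) ^ (2 * m + 1))
              + ∑ i ∈ idxSet N,
                  (c.2.1 i * q1i N m n i (a i) + c.2.2 i * q2i N m n i (a i)) := by
  have hex : ∀ i : ℕ, ∃ b : ℕ → ℝ, i ∈ idxSet N → b 0 = 1 ∧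
      IsQuasiInv N m n (q1i N m n i (fun s => (b s : ℂ))) ∧
      IsQuasiInv N m n (q2i N m n i (fun s => (b s : ℂ))) := by
    intro i
    by_cases hi : i ∈ idxSet N
    · obtain ⟨b, hb⟩ := exists_coeffs hN hmn (idx_not_dvd hi)
      exact ⟨b, fun _ => hb⟩
    · exact ⟨0, fun h => absurd h hi⟩
  choose b hb using hex
  refine ⟨fun i s => (b i s : ℂ), ?_, ?_⟩
  · intro i hi
    obtain ⟨h1, h2, h3⟩ := hb i hi
    exact ⟨by simp [h1], h2, h3⟩
  intro p hp
  obtain ⟨s0, hs0, s1, hs1, s2, hs2, s3, hs3, t1, t2, ht, hz, e⟩ := main_exists hN b hb p hp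
  refine ⟨((s0, s1, s2, s3), t1, t2), ⟨hs0, hs1, hs2, hs3, ht, hz, e⟩, ?_⟩
  rintro ⟨⟨r0, r1, r2, r3⟩, u1, u2⟩ ⟨hr0, hr1, hr2, hr3, hu, hzu, e'⟩
  simp only at hr0 hr1 hr2 hr3 hu hzu e'
  have key := main_indep (m := m) (n := n) hN b hb (t1 := fun i => u1 i - t1 i)
    (t2 := fun i => u2 i - t2 i) (sub_mem hr0 hs0) (sub_mem hr1 hs1)
    (sub_mem hr2 hs2) (sub_mem hr3 hs3)
    (fun i hi => ⟨sub_mem (hu i hi).1 (ht i hi).1, sub_mem (hu i hi).2 (ht i hi).2⟩) (by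
      have hs : ∑ i ∈ idxSet N, ((u1 i - t1 i) * q1i N m n i (fun s => (b i s : ℂ))
            + (u2 i - t2 i) * q2i N m n i (fun s => (b i s : ℂ)))
          = ∑ i ∈ idxSet N, (u1 i * q1i N m n i (fun s => (b i s : ℂ))
            + u2 i * q2i N m n i (fun s => (b i s : ℂ)))
          - ∑ i ∈ idxSet N, (t1 i * q1i N m n i (fun s => (b i s : ℂ))
            + t2 i * q2i N m n i (fun s => (b i s : ℂ))) := by
        rw [← Finset.sum_sub_distrib]
        apply Finset.sum_congr rfl
        intro i _
        ring
      rw [hs]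
      linear_combination e - e')
  obtain ⟨k0, k1, k2, k3, kt⟩ := key
  have hu1 : u1 = t1 := by
    funext i
    by_cases hi : i ∈ idxSet N
    · exact sub_eq_zero.mp (kt i hi).1
    · rw [(hzu i hi).1, (hz i hi).1]
  have hu2 : u2 = t2 := by
    funext i
    by_cases hi : i ∈ idxSet N
    · exact sub_eq_zero.mp (kt i hi).2
    · rw [(hzu i hi).2, (hz i hi).2]
  rw [sub_eq_zero.mp k0, sub_eq_zero.mp k1, sub_eq_zero.mp k2, sub_eq_zero.mp k3, hu1, hu2]
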